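/- arXiv:1908.08915 — 2 statements merged into one kernel-verified Lean document; each statement's English description precedes it below -/
import Mathlib

section
/- (A priori bound, nondivergent form) Let p ∈ (1,∞), l ∈ (0,p), n ∈ [1,∞) real, R ∈ (0,∞]. Let φ : ℝ → ℝ be continuous and odd with τφ(τ) > 0 for a.e. τ, and set Φ(t) := ∫_0^t φ(s) ds. Let a be locally absolutely continuous on [0,R) with a > 0 a.e., let δ_a(τ) := (n−1)a(τ)/τ − (1−1/p)a'(τ) satisfy δ_a > 0 a.e. with δ_a and δ_a^{−1/(p−1)} locally integrable on [0,R). Let h : (0,R) × ℝ² → ℝ be a Carathéodory function such that for some θ ∈ (0,1] and a non-negative measurable q locally integrable on [0,R): h(τ,λ₀,λ₁)λ₁ ≤ θ q(τ)|λ₀|^l |λ₁|^{p−l} + (1−θ) δ_a(τ)|λ₁|^p for all λ₀, λ₁ ∈ ℝ and a.e. τ. Assume K(0,R,q,δ_a) ≤ 1. Let u be locally absolutely continuous on (0,R) with Φ_p(u') locally absolutely continuous on [0,R) (in particular u, u' extend continuously to [0,R)), u(0) = 0, and suppose u solves the nondivergent ODE: a(τ)(Φ_p(u'(τ)))' + (n−1)(a(τ)/τ)Φ_p(u'(τ))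 − h(τ,u(τ),u'(τ)) + φ(u(τ)) = 0 for a.e. τ ∈ (0,R). Then for every r ∈ (0,R): Φ(|u(r)|) ≤ (1 − 1/p) a(0) |u'(0)|^p. -/
open MeasureTheory Set Filter
open scoped ENNReal

/-- `Φ_p(λ) = |λ|^{p-2} λ` for `λ ≠ 0`, and `Φ_p(0) = 0`. -/
noncomputable def PhiP (p x : ℝ) : ℝ := if x = 0 then 0 else |x| ^ (p - 2) * x

/-- `u` is absolutely continuous on `[s,t]` with a.e. derivative `u'`:
`u'` is integrable on `[s,t]` and the fundamental theorem of calculus holds. -/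
def ACOn (u u' : ℝ → ℝ) (s t : ℝ) : Prop :=
  MeasureTheory.IntegrableOn u' (Set.Icc s t) ∧
    ∀ x ∈ Set.Icc s t, u x = u s + ∫ σ in s..x, u' σ

/-- The Beesack–Das constant
`K(s,·,q,v) = ((p-l)/p)^{(p-l)/p} [∫_S q(t)^{p/l} v(t)^{-(p-l)/l}
  (∫_s^t v(σ)^{-1/(p-1)} dσ)^{p-1} dt]^{l/p}`, over a set `S`. -/
noncomputable def BDK (p l : ℝ) (q v : ℝ → ℝ) (s : ℝ) (S : Set ℝ) : ℝ≥0∞ :=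
  ENNReal.ofReal (((p - l) / p) ^ ((p - l) / p)) *
    (∫⁻ t in S,
      ENNReal.ofReal (q t) ^ (p / l) * ENNReal.ofReal (v t) ^ (-((p - l) / l)) *
        (∫⁻ σ in Set.Ioc s t, ENNReal.ofReal (v σ) ^ (-(1 / (p - 1)))) ^ (p - 1)) ^ (l / p)

/-- `δ_a(τ) = (n-1) a(τ)/τ - (1 - 1/p) a'(τ)`. -/
noncomputable def deltaA (n p : ℝ) (a a' : ℝ → ℝ) : ℝ → ℝ :=
  fun τ => (n - 1) * a τ / τ - (1 - 1 / p) * a' τ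

/-- `d_a(τ) = (n-1) a(τ)/τ + (1/p) a'(τ)`. -/
noncomputable def dA (n p : ℝ) (a a' : ℝ → ℝ) : ℝ → ℝ :=
  fun τ => (n - 1) * a τ / τ + (1 / p) * a' τ

lemma ac_congr {f g : ℝ → ℝ} {r : ℝ} (hfg : ∀ x ∈ uIcc 0 r, f x = g x)
    (hf : AbsolutelyContinuousOnInterval f 0 r) : AbsolutelyContinuousOnInterval g 0 r := by
  rw [absolutelyContinuousOnInterval_iff] at hf ⊢
  intro ε hε
  obtain ⟨δ, hδ, H⟩ := hf ε hε
  refine ⟨δ, hδ, fun E hE h => ?_⟩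
  have := H E hE h
  convert this using 1
  refine Finset.sum_congr rfl fun i hi => ?_
  have h1 := hE.1 i hi
  rw [hfg _ h1.1, hfg _ h1.2]

lemma acOn_ac {f f' : ℝ → ℝ} {r : ℝ} (hr : 0 < r) (hf : ACOn f f' 0 r) :
    AbsolutelyContinuousOnInterval f 0 r ∧
      ∀ᵐ x ∂(volume.restrict (Ioc 0 r)), HasDerivAt f (f' x) x := by
  obtain ⟨hi, hx⟩ := hf
  have hi' : IntervalIntegrable f' volume 0 r := by
    rw [intervalIntegrable_iff_integrableOn_Icc_of_le hr.le]; exact hi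
  have hu : uIcc 0 r = Icc 0 r := uIcc_of_le hr.le
  constructor
  · have h1 := hi'.absolutelyContinuousOnInterval_intervalIntegral (c := 0) (by simp)
    have h2 : AbsolutelyContinuousOnInterval (fun _ : ℝ => f 0) 0 r :=
      (LipschitzWith.const (f 0)).lipschitzOnWith.absolutelyContinuousOnInterval
    refine ac_congr ?_ (h2.add h1)
    intro x hx'
    rw [hu] at hx'
    simp [hx x hx']
  · rw [ae_restrict_iff' measurableSet_Ioc]
    have hne : ∀ᵐ x : ℝ, x ≠ r := by simp [ae_iff, measure_singleton]
    filter_upwards [hi'.ae_hasDerivAt_integral, hne] with x h1 h2 h3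
    have h4 := (h1 (by rw [hu]; exact ⟨h3.1.le, h3.2⟩) 0 (by simp)).const_add (f 0)
    refine h4.congr_of_eventuallyEq ?_
    have : Ioo 0 r ∈ nhds x := Ioo_mem_nhds h3.1 (lt_of_le_of_ne h3.2 h2)
    filter_upwards [this] with y hy
    exact hx y ⟨hy.1.le, hy.2.le⟩

lemma ac_comp {f G : ℝ → ℝ} {r : ℝ} (hG : ContDiff ℝ 1 G)
    (hf : AbsolutelyContinuousOnInterval f 0 r) :
    AbsolutelyContinuousOnInterval (fun x => G (f x)) 0 r := by
  obtain ⟨C, hC⟩ := hf.exists_bound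
  obtain ⟨K, hK⟩ := (hG.contDiffOn (s := Icc (-C) C)).exists_lipschitzOnWith one_ne_zero
    (convex_Icc _ _) isCompact_Icc
  rw [absolutelyContinuousOnInterval_iff] at hf ⊢
  intro ε hε
  obtain ⟨δ, hδ, H⟩ := hf (ε / (K + 1)) (by positivity)
  refine ⟨δ, hδ, fun E hE h => ?_⟩
  have h0 := H E hE h
  have hK0 : (0:ℝ) ≤ K := K.2
  have h1 : ∑ i ∈ Finset.range E.1, dist (G (f (E.2 i).1)) (G (f (E.2 i).2)) ≤
      ∑ i ∈ Finset.range E.1, (K + 1) * dist (f (E.2 i).1) (f (E.2 i).2) := by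
    refine Finset.sum_le_sum fun i hi => ?_
    have h1 := hE.1 i hi
    have := hK.dist_le_mul (f (E.2 i).1) (abs_le.1 (hC _ h1.1)) (f (E.2 i).2)
      (abs_le.1 (hC _ h1.2))
    refine this.trans ?_
    gcongr
    linarith
  rw [← Finset.mul_sum] at h1
  refine h1.trans_lt ?_
  rw [lt_div_iff₀ (by positivity)] at h0
  linarith

lemma contDiff_abs_rpow {m : ℝ} (hm : 1 < m) : ContDiff ℝ 1 (fun x : ℝ => |x| ^ m) := by
  have := contDiff_norm_rpow (E := ℝ) hm
  simpa using this

lemma hasDerivAt_prim {φ : ℝ → ℝ} (hφ : Continuous φ) (x : ℝ) :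
    HasDerivAt (fun t => ∫ s in (0:ℝ)..t, φ s) (φ x) x :=
  intervalIntegral.integral_hasDerivAt_right (hφ.intervalIntegrable _ _)
    hφ.stronglyMeasurable.stronglyMeasurableAtFilter hφ.continuousAt

lemma contDiff_prim {φ : ℝ → ℝ} (hφ : Continuous φ) :
    ContDiff ℝ 1 (fun t => ∫ s in (0:ℝ)..t, φ s) := by
  rw [contDiff_one_iff_deriv]
  refine ⟨fun x => (hasDerivAt_prim hφ x).differentiableAt, ?_⟩
  have : deriv (fun t => ∫ s in (0:ℝ)..t, φ s) = φ := funext fun x => (hasDerivAt_prim hφ x).deriv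
  rw [this]; exact hφ

lemma ac_ftc {f g : ℝ → ℝ} {r : ℝ} (hr : 0 < r) (hf : AbsolutelyContinuousOnInterval f 0 r)
    (hd : ∀ᵐ x ∂(volume.restrict (Ioc 0 r)), HasDerivAt f (g x) x) :
    IntegrableOn g (Ioc 0 r) ∧ ∫ x in Ioc 0 r, g x = f r - f 0 := by
  have h1 := hf.intervalIntegrable_deriv
  have h2 := hf.integral_deriv_eq_sub
  rw [intervalIntegrable_iff_integrableOn_Ioc_of_le hr.le] at h1
  rw [intervalIntegral.integral_of_le hr.le] at h2
  have h3 : deriv f =ᵐ[volume.restrict (Ioc 0 r)] g := by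
    filter_upwards [hd] with x hx using hx.deriv
  exact ⟨h1.congr h3, by rw [← h2]; exact (integral_congr_ae h3).symm⟩

lemma abs_PhiP {p : ℝ} (hp : 1 < p) (x : ℝ) : |PhiP p x| = |x| ^ (p - 1) := by
  unfold PhiP
  split_ifs with h
  · rw [h, abs_zero, Real.zero_rpow (by linarith)]
  · rw [abs_mul, abs_of_nonneg (by positivity), ← Real.rpow_add_one (by simpa using h)]
    congr 1; ring

lemma abs_PhiP_rpow {p : ℝ} (hp : 1 < p) (x : ℝ) : |PhiP p x| ^ (p / (p - 1)) = |x| ^ p := by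
  have : p - 1 ≠ 0 := by linarith
  rw [abs_PhiP hp, ← Real.rpow_mul (abs_nonneg _)]
  congr 1; field_simp

lemma PhiP_inv {p : ℝ} (hp : 1 < p) (x : ℝ) :
    |PhiP p x| ^ (p / (p - 1) - 2) * PhiP p x = x := by
  have hp1 : p - 1 ≠ 0 := by linarith
  by_cases h : x = 0
  · simp [PhiP, h]
  have hx : 0 < |x| := abs_pos.2 h
  rw [abs_PhiP hp, ← Real.rpow_mul (abs_nonneg _), PhiP, if_neg h, ← mul_assoc,
    ← Real.rpow_add hx]
  have : (p - 1) * (p / (p - 1) - 2) + (p - 2) = 0 := by field_simp; ring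
  rw [this]; simp

lemma PhiP_mul {p : ℝ} (hp : 1 < p) (x : ℝ) : PhiP p x * x = |x| ^ p := by
  by_cases h : x = 0
  · simp [PhiP, h, Real.zero_rpow (by linarith : p ≠ 0)]
  have hx : 0 < |x| := abs_pos.2 h
  rw [PhiP, if_neg h, mul_assoc, ← abs_mul_abs_self x, ← mul_assoc, ← Real.rpow_add_one hx.ne',
    ← Real.rpow_add_one hx.ne']
  congr 1; ring

lemma inner_lint {g : ℝ → ℝ} {r t : ℝ} (hg : IntegrableOn g (Ioc 0 r))
    (hg0 : ∀ᵐ x ∂(volume.restrict (Ioc 0 r)), 0 ≤ g x) (ht : t ∈ Icc 0 r) :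
    ∫⁻ σ in Ioc 0 t, ENNReal.ofReal (g σ) = ENNReal.ofReal (∫ σ in (0:ℝ)..t, g σ) ∧
      0 ≤ ∫ σ in (0:ℝ)..t, g σ := by
  have hs : Ioc 0 t ⊆ Ioc 0 r := Ioc_subset_Ioc_right ht.2
  have h0 : ∀ᵐ x ∂(volume.restrict (Ioc 0 t)), 0 ≤ g x := ae_restrict_of_ae_restrict_of_subset hs hg0
  rw [intervalIntegral.integral_of_le ht.1,
    ofReal_integral_eq_lintegral_ofReal (hg.mono_set hs) h0]
  exact ⟨rfl, integral_nonneg_of_ae h0⟩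

lemma pow_int {g : ℝ → ℝ} {r m : ℝ} (hr : 0 < r) (hm : 0 < m) (hg : IntegrableOn g (Ioc 0 r))
    (hg0 : ∀ᵐ x ∂(volume.restrict (Ioc 0 r)), 0 ≤ g x) :
    ∫⁻ t in Ioc 0 r, (∫⁻ σ in Ioc 0 t, ENNReal.ofReal (g σ)) ^ m * ENNReal.ofReal (g t) =
      ENNReal.ofReal (1 / (m + 1)) * (∫⁻ σ in Ioc 0 r, ENNReal.ofReal (g σ)) ^ (m + 1) := by
  set y : ℝ → ℝ := fun t => ∫ σ in (0:ℝ)..t, g σ with hy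
  have hac : ACOn y g 0 r := by
    refine ⟨by rwa [integrableOn_Icc_iff_integrableOn_Ioc], fun x _ => ?_⟩
    simp [hy]
  obtain ⟨hyac, hyd⟩ := acOn_ac hr hac
  have hac2 := ac_comp (contDiff_abs_rpow (by linarith : 1 < m + 1)) hyac
  have hmem : ∀ᵐ x ∂(volume.restrict (Ioc 0 r)), x ∈ Ioc 0 r := ae_restrict_mem measurableSet_Ioc
  have hd2 : ∀ᵐ x ∂(volume.restrict (Ioc 0 r)),
      HasDerivAt (fun x => |y x| ^ (m + 1)) ((m + 1) * (y x ^ m * g x)) x := by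
    filter_upwards [hyd, hmem] with x hx hm1
    have h1 := (hasDerivAt_abs_rpow (y x) (by linarith : 1 < m + 1)).comp x hx
    refine h1.congr_deriv ?_
    have h0 : 0 ≤ y x := (inner_lint hg hg0 ⟨hm1.1.le, hm1.2⟩).2
    rw [abs_of_nonneg h0]
    rcases h0.eq_or_lt with h | h
    · rw [← h, Real.zero_rpow hm.ne']; ring
    · rw [mul_assoc (m + 1), ← Real.rpow_add_one h.ne']
      rw [show m + 1 - 2 + 1 = m by ring]; ring
  obtain ⟨hi, he⟩ := ac_ftc hr hac2 hd2
  have hi' : IntegrableOn (fun x => y x ^ m * g x) (Ioc 0 r) := by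
    have := hi.const_mul (1 / (m + 1))
    refine this.congr (Eventually.of_forall fun x => ?_)
    have : m + 1 ≠ 0 := by linarith
    field_simp
  have hlhs : ∫⁻ t in Ioc 0 r, (∫⁻ σ in Ioc 0 t, ENNReal.ofReal (g σ)) ^ m * ENNReal.ofReal (g t) =
      ∫⁻ t in Ioc 0 r, ENNReal.ofReal (y t ^ m * g t) := by
    refine lintegral_congr_ae ?_
    filter_upwards [hmem] with x hx
    obtain ⟨h1, h2⟩ := inner_lint hg hg0 ⟨hx.1.le, hx.2⟩
    rw [h1, ENNReal.ofReal_rpow_of_nonneg h2 hm.le, ← ENNReal.ofReal_mul (by positivity)]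
  have hnn : ∀ᵐ x ∂(volume.restrict (Ioc 0 r)), 0 ≤ y x ^ m * g x := by
    filter_upwards [hmem, hg0] with x hx hx0
    obtain ⟨h1, h2⟩ := inner_lint hg hg0 ⟨hx.1.le, hx.2⟩
    exact mul_nonneg (Real.rpow_nonneg h2 _) hx0
  rw [hlhs, ← ofReal_integral_eq_lintegral_ofReal hi' hnn]
  obtain ⟨h1, h2⟩ := inner_lint hg hg0 (right_mem_Icc.2 hr.le)
  rw [h1, ENNReal.ofReal_rpow_of_nonneg h2 (by linarith), ← ENNReal.ofReal_mul (by positivity)]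
  congr 1
  rw [integral_const_mul] at he
  have hy0 : y 0 = 0 := by simp [hy]
  rw [hy0, abs_zero, Real.zero_rpow (by linarith), sub_zero, abs_of_nonneg h2] at he
  have : m + 1 ≠ 0 := by linarith
  field_simp
  linarith

lemma beesack {p l r : ℝ} (hp : 1 < p) (hl0 : 0 < l) (hlp : l < p) (hr : 0 < r)
    {q d u u' : ℝ → ℝ} (hq : Measurable q)
    (hq0 : ∀ᵐ x ∂(volume.restrict (Ioc 0 r)), 0 ≤ q x)
    (hd : ∀ᵐ x ∂(volume.restrict (Ioc 0 r)), 0 < d x)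
    (hdi : IntegrableOn d (Ioc 0 r)) (hu'c : ContinuousOn u' (Icc 0 r))
    (hu : ∀ t ∈ Icc 0 r, u t = ∫ σ in (0:ℝ)..t, u' σ)
    (hgi : IntegrableOn (fun t => d t * |u' t| ^ p) (Ioc 0 r))
    (hK : BDK p l q d 0 (Ioc 0 r) ≤ 1) :
    ∫⁻ t in Ioc 0 r, ENNReal.ofReal (q t * |u t| ^ l * |u' t| ^ (p - l)) ≤
      ∫⁻ t in Ioc 0 r, ENNReal.ofReal (d t * |u' t| ^ p) := by
  have hp0 : 0 < p := by linarith
  have hpl : 0 < p - l := by linarith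
  have hp1 : 0 < p - 1 := by linarith
  have hmem : ∀ᵐ x ∂(volume.restrict (Ioc 0 r)), x ∈ Ioc 0 r := ae_restrict_mem measurableSet_Ioc
  set D : ℝ → ℝ≥0∞ := fun t => ENNReal.ofReal (d t) with hD
  set U : ℝ → ℝ≥0∞ := fun t => ENNReal.ofReal |u' t| with hU
  set g : ℝ → ℝ := fun t => d t * |u' t| ^ p with hg
  have hg0 : ∀ᵐ x ∂(volume.restrict (Ioc 0 r)), 0 ≤ g x := by
    filter_upwards [hd] with x hx
    positivity
  have hgD : ∀ᵐ x ∂(volume.restrict (Ioc 0 r)), ENNReal.ofReal (g x) = D x * U x ^ p := by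
    filter_upwards [hd] with x hx
    simp only [hg, hD, hU]
    rw [ENNReal.ofReal_mul hx.le, ENNReal.ofReal_rpow_of_nonneg (abs_nonneg _) hp0.le]
  set V : ℝ → ℝ≥0∞ := fun t => ∫⁻ σ in Ioc 0 t, D σ ^ (-(1 / (p - 1))) with hV
  set Y : ℝ → ℝ≥0∞ := fun t => ∫⁻ σ in Ioc 0 t, ENNReal.ofReal (g σ) with hY
  have hVm : Measurable V := by
    refine Monotone.measurable fun s t hst => ?_
    exact lintegral_mono_set (Ioc_subset_Ioc_right hst)
  have hYm : Measurable Y := by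
    refine Monotone.measurable fun s t hst => ?_
    exact lintegral_mono_set (Ioc_subset_Ioc_right hst)
  have hDm : AEMeasurable D (volume.restrict (Ioc 0 r)) := hdi.aemeasurable.ennreal_ofReal
  have hUm : AEMeasurable U (volume.restrict (Ioc 0 r)) := by
    have := ((hu'c.mono Ioc_subset_Icc_self).abs.aemeasurable (μ := volume) measurableSet_Ioc)
    exact this.ennreal_ofReal
  have hgm : AEMeasurable (fun t => ENNReal.ofReal (g t)) (volume.restrict (Ioc 0 r)) :=
    hgi.aemeasurable.ennreal_ofReal
  -- step A
  have hA : ∀ t ∈ Ioc 0 r, ENNReal.ofReal |u t| ≤ V t ^ ((p - 1) / p) * Y t ^ (1 / p) := by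
    intro t ht
    have hs : Ioc 0 t ⊆ Ioc 0 r := Ioc_subset_Ioc_right ht.2
    have h1 : ENNReal.ofReal |u t| ≤ ∫⁻ σ in Ioc 0 t, U σ := by
      rw [hu t ⟨ht.1.le, ht.2⟩, intervalIntegral.integral_of_le ht.1.le]
      have := enorm_integral_le_lintegral_enorm (μ := volume.restrict (Ioc 0 t)) u'
      simpa [Real.enorm_eq_ofReal_abs, hU] using this
    refine h1.trans ?_
    have hμ : volume.restrict (Ioc 0 t) ≤ volume.restrict (Ioc 0 r) := Measure.restrict_mono hs le_rfl
    have h2 : ∫⁻ σ in Ioc 0 t, U σ = ∫⁻ σ in Ioc 0 t,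
        ((fun σ => D σ ^ (-(1 / p))) * (fun σ => D σ ^ (1 / p) * U σ)) σ := by
      refine lintegral_congr_ae ?_
      filter_upwards [ae_restrict_of_ae_restrict_of_subset hs hd] with x hx
      have hD0 : D x ≠ 0 := by simpa [hD] using hx
      have hDt : D x ≠ ⊤ := ENNReal.ofReal_ne_top
      simp only [Pi.mul_apply]
      rw [← mul_assoc, ← ENNReal.rpow_add _ _ hD0 hDt]
      simp
    rw [h2]
    have hpq : (p / (p - 1)).HolderConjugate p := by
      rw [Real.holderConjugate_iff]
      refine ⟨by rw [lt_div_iff₀ hp1]; linarith, by field_simp; ring⟩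
    refine (ENNReal.lintegral_mul_le_Lp_mul_Lq _ hpq ?_ ?_).trans (le_of_eq ?_)
    · exact (hDm.mono_measure hμ).pow_const _
    · exact ((hDm.mono_measure hμ).pow_const _).mul (hUm.mono_measure hμ)
    · congr 1
      · rw [one_div_div]
        congr 1
        refine lintegral_congr fun x => ?_
        rw [← ENNReal.rpow_mul]
        congr 1
        field_simp
      · congr 1
        refine lintegral_congr_ae ?_
        filter_upwards [ae_restrict_of_ae_restrict_of_subset hs hgD] with x hx
        rw [hx, ENNReal.mul_rpow_of_nonneg _ _ hp0.le, ← ENNReal.rpow_mul]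
        congr 1
        rw [one_div, inv_mul_cancel₀ hp0.ne', ENNReal.rpow_one]
  -- step B
  set F : ℝ → ℝ≥0∞ := fun t => ENNReal.ofReal (q t) * D t ^ (-((p - l) / p)) *
    V t ^ (l * (p - 1) / p) with hF
  set G : ℝ → ℝ≥0∞ := fun t => Y t ^ (l / p) * ENNReal.ofReal (g t) ^ ((p - l) / p) with hG
  have hB : ∫⁻ t in Ioc 0 r, ENNReal.ofReal (q t * |u t| ^ l * |u' t| ^ (p - l)) ≤
      ∫⁻ t in Ioc 0 r, (F * G) t := by
    refine lintegral_mono_ae ?_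
    filter_upwards [hmem, hd, hq0, hgD] with t ht hdt hqt hgt
    have hD0 : D t ≠ 0 := by simpa [hD] using hdt
    have hDt : D t ≠ ⊤ := ENNReal.ofReal_ne_top
    simp only [Pi.mul_apply, hF, hG]
    rw [ENNReal.ofReal_mul (by positivity), ENNReal.ofReal_mul (by positivity),
      ← ENNReal.ofReal_rpow_of_nonneg (abs_nonneg _) hl0.le,
      ← ENNReal.ofReal_rpow_of_nonneg (abs_nonneg _) hpl.le, hgt]
    have e1 : D t ^ (-((p - l) / p)) * (D t * U t ^ p) ^ ((p - l) / p) = U t ^ (p - l) := by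
      rw [ENNReal.mul_rpow_of_nonneg _ _ (by positivity), ← mul_assoc,
        ← ENNReal.rpow_add _ _ hD0 hDt, ← ENNReal.rpow_mul]
      rw [neg_add_cancel, ENNReal.rpow_zero, one_mul]
      congr 1
      field_simp
    have e2 : ENNReal.ofReal |u t| ^ l ≤ V t ^ (l * (p - 1) / p) * Y t ^ (l / p) := by
      refine (ENNReal.rpow_le_rpow (hA t ht) hl0.le).trans (le_of_eq ?_)
      rw [ENNReal.mul_rpow_of_nonneg _ _ hl0.le, ← ENNReal.rpow_mul, ← ENNReal.rpow_mul]
      congr 2 <;> ring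
    calc _ ≤ ENNReal.ofReal (q t) * (V t ^ (l * (p - 1) / p) * Y t ^ (l / p)) *
          (D t ^ (-((p - l) / p)) * (D t * U t ^ p) ^ ((p - l) / p)) := by
            rw [e1]; gcongr
      _ = _ := by ring
  have hpq : (p / l).HolderConjugate (p / (p - l)) := by
    rw [Real.holderConjugate_iff]
    refine ⟨by rw [lt_div_iff₀ hl0]; linarith, by field_simp; ring⟩
  have hFm : AEMeasurable F (volume.restrict (Ioc 0 r)) :=
    ((hq.ennreal_ofReal.aemeasurable.mul (hDm.pow_const _)).mul (hVm.pow_const _).aemeasurable)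
  have hGm : AEMeasurable G (volume.restrict (Ioc 0 r)) :=
    ((hYm.pow_const _).aemeasurable.mul (hgm.pow_const _))
  refine hB.trans ((ENNReal.lintegral_mul_le_Lp_mul_Lq _ hpq hFm hGm).trans ?_)
  have eF : ∀ t, F t ^ (p / l) = ENNReal.ofReal (q t) ^ (p / l) *
      ENNReal.ofReal (d t) ^ (-((p - l) / l)) * V t ^ (p - 1) := by
    intro t
    simp only [hF]
    rw [ENNReal.mul_rpow_of_nonneg _ _ (by positivity), ENNReal.mul_rpow_of_nonneg _ _ (by positivity),
      ← ENNReal.rpow_mul, ← ENNReal.rpow_mul]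
    congr 2
    · congr 1; field_simp
    · field_simp
  have eG : ∀ t, G t ^ (p / (p - l)) = Y t ^ (l / (p - l)) * ENNReal.ofReal (g t) := by
    intro t
    simp only [hG]
    rw [ENNReal.mul_rpow_of_nonneg _ _ (by positivity), ← ENNReal.rpow_mul, ← ENNReal.rpow_mul]
    congr 1
    · congr 1; field_simp
    · rw [show (p - l) / p * (p / (p - l)) = 1 by field_simp, ENNReal.rpow_one]
  have e3 : l / (p - l) + 1 = p / (p - l) := by field_simp; ring
  rw [lintegral_congr eF, lintegral_congr eG, pow_int hr (by positivity) hgi hg0, e3,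
    ENNReal.mul_rpow_of_nonneg _ _ (by positivity), ← ENNReal.rpow_mul,
    show p / (p - l) * (1 / (p / (p - l))) = 1 by field_simp, ENNReal.rpow_one, one_div_div, one_div_div,
    ENNReal.ofReal_rpow_of_nonneg (by positivity) (by positivity), ← mul_assoc]
  unfold BDK at hK
  rw [mul_comm] at hK
  calc _ ≤ 1 * ∫⁻ σ in Ioc 0 r, ENNReal.ofReal (g σ) := by gcongr
    _ = _ := one_mul _

lemma continuous_PhiInv {m : ℝ} (hm : 1 < m) : Continuous (fun x : ℝ => |x| ^ (m - 2) * x) := by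
  have h1 := (contDiff_one_iff_deriv.1 (contDiff_abs_rpow hm)).2
  have h2 : deriv (fun x : ℝ => |x| ^ m) = fun x => m * |x| ^ (m - 2) * x :=
    funext fun x => (hasDerivAt_abs_rpow x hm).deriv
  rw [h2] at h1
  have h3 := h1.const_mul (1 / m)
  refine h3.congr fun x => ?_
  have : m ≠ 0 := by linarith
  field_simp

lemma nonneg_of_ae {a : ℝ → ℝ} {r : ℝ} (hr : 0 < r) (ha : ContinuousOn a (Icc 0 r))
    (hpos : ∀ᵐ x ∂(volume.restrict (Ioc 0 r)), 0 < a x) : 0 ≤ a r := by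
  by_contra hneg
  push Not at hneg
  have h1 := ha r (right_mem_Icc.2 hr.le)
  have h2 : ∀ᶠ x in nhdsWithin r (Icc 0 r), a x < 0 := h1.eventually_lt continuousWithinAt_const hneg
  rw [eventually_nhdsWithin_iff, Metric.eventually_nhds_iff] at h2
  obtain ⟨ε, hε, h3⟩ := h2
  set c := max 0 (r - ε) with hc
  have hcr : c < r := max_lt hr (by linarith)
  have hs : Ioo c r ⊆ Ioc 0 r := fun x hx => ⟨(le_max_left _ _).trans_lt hx.1, hx.2.le⟩
  have h4 := ae_restrict_of_ae_restrict_of_subset hs hpos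
  have h5 : ∀ᵐ x ∂(volume.restrict (Ioo c r)), False := by
    filter_upwards [h4, ae_restrict_mem measurableSet_Ioo] with x hx hm
    have h6 : r - ε < x := (le_max_right _ _).trans_lt hm.1
    have := h3 (y := x) (by rw [Real.dist_eq, abs_lt]; constructor <;> linarith [hm.2])
      ⟨(hs hm).1.le, (hs hm).2⟩
    linarith
  rw [eventually_false_iff_eq_bot, ae_eq_bot, Measure.restrict_eq_zero, Real.volume_Ioo] at h5
  simp at h5
  linarith

lemma prim_abs {φ : ℝ → ℝ} (hodd : ∀ t : ℝ, φ (-t) = -φ t) (x : ℝ) :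
    ∫ σ in (0:ℝ)..|x|, φ σ = ∫ σ in (0:ℝ)..x, φ σ := by
  rcases abs_choice x with h | h
  · rw [h]
  · rw [h]
    have := intervalIntegral.integral_comp_neg (a := x) (b := 0) φ
    simp only [hodd, neg_zero, intervalIntegral.integral_neg] at this
    rw [← this, intervalIntegral.integral_symm, neg_neg]

/-- **A priori bound (nondivergent form)**, Theorem 2 i) of the paper. -/
theorem apriori_bound_nondivergent
    (p l n : ℝ) (R : ℝ≥0∞)
    (hp : 1 < p) (hl0 : 0 < l) (hlp : l < p) (hn : 1 ≤ n) (hR : 0 < R)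
    (φ : ℝ → ℝ) (hφcont : Continuous φ) (hφodd : ∀ t : ℝ, φ (-t) = -φ t)
    (hφsign : ∀ᵐ τ ∂(volume : Measure ℝ), 0 < τ * φ τ)
    (a a' : ℝ → ℝ)
    (haAC : ∀ r : ℝ, 0 < r → ENNReal.ofReal r < R → ACOn a a' 0 r)
    (q : ℝ → ℝ) (hqmeas : Measurable q)
    (hapos : ∀ᵐ τ ∂(volume.restrict {τ : ℝ | 0 < τ ∧ ENNReal.ofReal τ < R}), 0 < a τ)
    (hvpos : ∀ᵐ τ ∂(volume.restrict {τ : ℝ | 0 < τ ∧ ENNReal.ofReal τ < R}), 0 < deltaA n p a a' τ)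
    (hvint : ∀ r : ℝ, 0 < r → ENNReal.ofReal r < R →
      IntegrableOn (deltaA n p a a') (Set.Ioc 0 r) ∧
        IntegrableOn (fun τ => deltaA n p a a' τ ^ (-(1 / (p - 1)))) (Set.Ioc 0 r))
    (hqint : ∀ r : ℝ, 0 < r → ENNReal.ofReal r < R → IntegrableOn q (Set.Ioc 0 r))
    (h : ℝ → ℝ → ℝ → ℝ)
    (hhmeas : ∀ lam₀ lam₁ : ℝ, Measurable fun τ => h τ lam₀ lam₁)
    (hhcont : ∀ τ : ℝ, Continuous fun z : ℝ × ℝ => h τ z.1 z.2)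
    (θ : ℝ) (hθ0 : 0 < θ) (hθ1 : θ ≤ 1)
    (hq0 : ∀ᵐ τ ∂(volume.restrict {τ : ℝ | 0 < τ ∧ ENNReal.ofReal τ < R}), 0 ≤ q τ)
    (hgrowth : ∀ᵐ τ ∂(volume.restrict {τ : ℝ | 0 < τ ∧ ENNReal.ofReal τ < R}),
      ∀ lam₀ lam₁ : ℝ, h τ lam₀ lam₁ * lam₁ ≤
        θ * q τ * |lam₀| ^ l * |lam₁| ^ (p - l) + (1 - θ) * deltaA n p a a' τ * |lam₁| ^ p)
    (hK : BDK p l q (deltaA n p a a') 0 {τ : ℝ | 0 < τ ∧ ENNReal.ofReal τ < R} ≤ 1)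
    (u u' v' : ℝ → ℝ)
    (huAC : ∀ r : ℝ, 0 < r → ENNReal.ofReal r < R → ACOn u u' 0 r)
    (hvAC : ∀ r : ℝ, 0 < r → ENNReal.ofReal r < R →
      ACOn (fun τ => PhiP p (u' τ)) v' 0 r)
    (hu0 : u 0 = 0)
    (hODE : ∀ᵐ τ ∂(volume.restrict {τ : ℝ | 0 < τ ∧ ENNReal.ofReal τ < R}),
      a τ * v' τ + (n - 1) * (a τ / τ) * PhiP p (u' τ)
        - h τ (u τ) (u' τ) + φ (u τ) = 0) :
    ∀ r : ℝ, 0 < r → ENNReal.ofReal r < R →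
      (∫ σ in (0:ℝ)..(|u r|), φ σ) ≤ (1 - 1 / p) * a 0 * |u' 0| ^ p := by
  intro r hr hrR
  have hsub : Ioc 0 r ⊆ {τ : ℝ | 0 < τ ∧ ENNReal.ofReal τ < R} := fun x hx =>
    ⟨hx.1, (ENNReal.ofReal_le_ofReal hx.2).trans_lt hrR⟩
  replace hapos := ae_restrict_of_ae_restrict_of_subset hsub hapos
  replace hvpos := ae_restrict_of_ae_restrict_of_subset hsub hvpos
  replace hq0 := ae_restrict_of_ae_restrict_of_subset hsub hq0
  replace hgrowth := ae_restrict_of_ae_restrict_of_subset hsub hgrowth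
  replace hODE := ae_restrict_of_ae_restrict_of_subset hsub hODE
  replace hdi := (hvint r hr hrR).1
  have huA := huAC r hr hrR
  have haA := haAC r hr hrR
  have hvA := hvAC r hr hrR
  replace hqint := hqint r hr hrR
  have hK' : BDK p l q (deltaA n p a a') 0 (Ioc 0 r) ≤ 1 := by
    refine le_trans ?_ hK
    unfold BDK
    have := lintegral_mono_set (μ := volume) (f := fun t =>
      ENNReal.ofReal (q t) ^ (p / l) * ENNReal.ofReal (deltaA n p a a' t) ^ (-((p - l) / l)) *
        (∫⁻ σ in Set.Ioc 0 t, ENNReal.ofReal (deltaA n p a a' σ) ^ (-(1 / (p - 1)))) ^ (p - 1)) hsub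
    gcongr
  set d := deltaA n p a a' with hd
  have hp1 : 0 < p - 1 := by linarith
  have hp0 : 0 < p := by linarith
  have hpl : 0 < p - l := by linarith
  have hm : 1 < p / (p - 1) := by rw [lt_div_iff₀ hp1]; linarith
  obtain ⟨huac, hud⟩ := acOn_ac hr huA
  obtain ⟨haac, had⟩ := acOn_ac hr haA
  obtain ⟨hwac, hwd⟩ := acOn_ac hr hvA
  have huI : uIcc 0 r = Icc 0 r := uIcc_of_le hr.le
  have hac : ContinuousOn a (Icc 0 r) := huI ▸ haac.continuousOn
  have huc : ContinuousOn u (Icc 0 r) := huI ▸ huac.continuousOn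
  have hwc : ContinuousOn (fun τ => PhiP p (u' τ)) (Icc 0 r) := huI ▸ hwac.continuousOn
  have hu'c : ContinuousOn u' (Icc 0 r) := by
    have := (continuous_PhiInv hm).comp_continuousOn hwc
    refine this.congr fun x _ => ?_
    exact (PhiP_inv hp (u' x)).symm
  have hupc : ContinuousOn (fun t => |u' t| ^ p) (Icc 0 r) :=
    hu'c.abs.rpow_const fun _ _ => Or.inr hp0.le
  have hgi : IntegrableOn (fun t => d t * |u' t| ^ p) (Ioc 0 r) := by
    rw [← integrableOn_Icc_iff_integrableOn_Ioc] at hdi ⊢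
    exact hdi.mul_continuousOn hupc isCompact_Icc
  have hqi : IntegrableOn (fun t => q t * |u t| ^ l * |u' t| ^ (p - l)) (Ioc 0 r) := by
    rw [← integrableOn_Icc_iff_integrableOn_Ioc] at hqint ⊢
    exact (hqint.mul_continuousOn (huc.abs.rpow_const fun _ _ => Or.inr hl0.le)
      isCompact_Icc).mul_continuousOn (hu'c.abs.rpow_const fun _ _ => Or.inr hpl.le) isCompact_Icc
  have hbee := beesack hp hl0 hlp hr (u := u) hqmeas hq0 hvpos hdi hu'c
    (fun t ht => by rw [huA.2 t ht, hu0, zero_add]) hgi hK'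
  have hint : ∫ t in Ioc 0 r, q t * |u t| ^ l * |u' t| ^ (p - l) ≤
      ∫ t in Ioc 0 r, d t * |u' t| ^ p := by
    have h1 : 0 ≤ᵐ[volume.restrict (Ioc 0 r)] fun t => q t * |u t| ^ l * |u' t| ^ (p - l) := by
      filter_upwards [hq0] with x hx
      simp only [Pi.zero_apply]; positivity
    have h2 : 0 ≤ᵐ[volume.restrict (Ioc 0 r)] fun t => d t * |u' t| ^ p := by
      filter_upwards [hvpos] with x hx
      simp only [Pi.zero_apply]; positivity
    rw [← ofReal_integral_eq_lintegral_ofReal hqi h1,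
      ← ofReal_integral_eq_lintegral_ofReal hgi h2] at hbee
    exact (ENNReal.ofReal_le_ofReal_iff (integral_nonneg_of_ae h2)).1 hbee
  -- the energy
  set E : ℝ → ℝ := fun τ => (1 - 1 / p) * (a τ * |PhiP p (u' τ)| ^ (p / (p - 1))) +
    ∫ s in (0:ℝ)..(u τ), φ s with hE
  have hEac : AbsolutelyContinuousOnInterval E 0 r := by
    have c1 := ac_comp (contDiff_abs_rpow hm) hwac
    have c2 := ac_comp (contDiff_prim hφcont) huac
    have c3 := (haac.mul c1).const_mul (1 - 1 / p)
    have c4 := c3.add c2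
    refine ac_congr (fun x _ => ?_) c4
    simp only [hE, Pi.add_apply, Pi.mul_apply]
  have hEd : ∀ᵐ x ∂(volume.restrict (Ioc 0 r)), HasDerivAt E
      (h x (u x) (u' x) * u' x - d x * |u' x| ^ p) x := by
    filter_upwards [hud, had, hwd, hODE] with x h1 h2 h3 h4
    have e1 := (hasDerivAt_abs_rpow (PhiP p (u' x)) hm).comp x h3
    have e2 := (hasDerivAt_prim hφcont (u x)).comp x h1
    have e3 := ((h2.mul e1).const_mul (1 - 1 / p)).add e2
    refine e3.congr_deriv ?_
    have i1 := PhiP_inv hp (u' x)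
    have i2 := PhiP_mul hp (u' x)
    have i3 := abs_PhiP_rpow hp (u' x)
    simp only [Function.comp]
    rw [i3, mul_assoc (p / (p - 1)), i1, hd, deltaA, ← i2]
    have h5 : h x (u x) (u' x) = a x * v' x + (n - 1) * (a x / x) * PhiP p (u' x) + φ (u x) := by
      linarith
    rw [h5]
    have h6 : (1 - 1 / p) * (p / (p - 1)) = 1 := by field_simp
    linear_combination (a x * u' x * v' x) * h6
  obtain ⟨hEi, hEe⟩ := ac_ftc hr hEac hEd
  have hle : ∫ x in Ioc 0 r, (h x (u x) (u' x) * u' x - d x * |u' x| ^ p) ≤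
      ∫ x in Ioc 0 r, θ * (q x * |u x| ^ l * |u' x| ^ (p - l) - d x * |u' x| ^ p) := by
    refine integral_mono_ae hEi ((hqi.sub hgi).const_mul θ) ?_
    filter_upwards [hgrowth] with x hx
    have := hx (u x) (u' x)
    linarith
  rw [integral_const_mul, integral_sub hqi hgi, hEe] at hle
  have hfin : E r ≤ E 0 := by
    have := mul_nonneg hθ0.le (sub_nonneg.2 hint)
    linarith
  simp only [hE, hu0, intervalIntegral.integral_same, abs_PhiP_rpow hp] at hfin
  have har := nonneg_of_ae hr hac hapos
  have hp' : 0 ≤ 1 - 1 / p := by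
    rw [sub_nonneg, div_le_one hp0]; exact hp.le
  have : 0 ≤ (1 - 1 / p) * (a r * |u' r| ^ p) := by positivity
  rw [prim_abs hφodd]
  linarith
end

section
/- (Support of the solution, nondivergent form) Let p ∈ (1,∞), l ∈ (0,p), n ∈ [1,∞) real, R ∈ (0,∞]. Let φ : ℝ → ℝ be continuous and odd with τφ(τ) > 0 for a.e. τ. Let a be locally absolutely continuous on (0,R) with a > 0 a.e., let δ_a(τ) := (n−1)a(τ)/τ − (1−1/p)a'(τ) satisfy δ_a > 0 a.e. with δ_a and δ_a^{−1/(p−1)} locally integrable on (0,R). Let h : (0,R) × ℝ² → ℝ be a Carathéodory function such that for some θ ∈ (0,1] and a non-negative measurable q locally integrable on (0,R): h(τ,λ₀,λ₁)λ₁ ≤ θ q(τ)|λ₀|^l |λ₁|^{p−l} + (1−θ) δ_a(τ)|λ₁|^p for all λ₀, λ₁ ∈ ℝ and a.e. τ. Assume K(s,r,q,δ_a) < ∞ for every 0 < s < r < R. Let u and Φ_p(u') be locally absolutely continuous on (0,R) and suppose u solves the nondivergent ODE: a(τ)(Φ_p(u'(τ)))' + (n−1)(a(τ)/τ)Φ_p(u'(τ))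 − h(τ,u(τ),u'(τ)) + φ(u(τ)) = 0 for a.e. τ ∈ (0,R). If u(s) = 0 and u'(s) = 0 for some s ∈ (0,R), then u ≡ 0 on [s,R). -/
open MeasureTheory Set Filter
open scoped ENNReal

theorem aux_ac_comp {f g : ℝ → ℝ} {a b : ℝ} (hg : ContDiff ℝ 1 g)
    (hf : AbsolutelyContinuousOnInterval f a b) :
    AbsolutelyContinuousOnInterval (fun x => g (f x)) a b := by
  obtain ⟨C, hC⟩ := hf.exists_bound
  obtain ⟨K, hK⟩ := (hg.contDiffOn (s := Set.Icc (-C) C)).exists_lipschitzOnWith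
    (by decide) (convex_Icc _ _) isCompact_Icc
  have hf' := hf
  unfold AbsolutelyContinuousOnInterval at hf ⊢
  apply squeeze_zero' ?_ ?_ (by simpa using (hf.const_mul (K : ℝ)))
  · exact Filter.Eventually.of_forall <| fun _ ↦ Finset.sum_nonneg (fun i hi ↦ dist_nonneg)
  rw [eventually_inf_principal]
  filter_upwards with (n, I) hnI
  simp only [Finset.mul_sum]
  gcongr with i hi
  simp only [AbsolutelyContinuousOnInterval.disjWithin, mem_ofPred_eq] at hnI
  have h1 := hC _ (hnI.left i hi |>.left)
  have h2 := hC _ (hnI.left i hi |>.right)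
  rw [Real.norm_eq_abs, abs_le] at h1 h2
  exact hK.dist_le_mul _ h1 _ h2

theorem aux_ACOn {u u' : ℝ → ℝ} {s r : ℝ} (hsr : s ≤ r) (H : ACOn u u' s r) :
    AbsolutelyContinuousOnInterval u s r ∧
      ∀ᵐ x, x ∈ Set.Ioo s r → HasDerivAt u (u' x) x := by
  obtain ⟨hi, hx⟩ := H
  have hii : IntervalIntegrable u' volume s r := by
    rw [intervalIntegrable_iff_integrableOn_Icc_of_le hsr]; exact hi
  constructor
  · have h1 := hii.absolutelyContinuousOnInterval_intervalIntegral (c := s) (by simp)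
    have h2 : AbsolutelyContinuousOnInterval (fun _ : ℝ => u s) s r :=
      (contDiff_const.contDiffOn).absolutelyContinuousOnInterval
    have h3 := h2.add h1
    rw [absolutelyContinuousOnInterval_iff] at h3 ⊢
    intro ε hε
    obtain ⟨d, hd, h4⟩ := h3 ε hε
    refine ⟨d, hd, fun E hE hE' => ?_⟩
    convert h4 E hE hE' using 1
    apply Finset.sum_congr rfl
    intro i hi
    have hE1 := hE.1 i hi
    rw [Set.uIcc_of_le hsr] at hE1
    simp only [Pi.add_apply]
    rw [hx _ hE1.1, hx _ hE1.2]
  · filter_upwards [hii.ae_hasDerivAt_integral] with x h1 h2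
    have h3 := h1 (by rw [Set.uIcc_of_le hsr]; exact ⟨h2.1.le, h2.2.le⟩) s (by simp)
    refine (h3.const_add (u s)).congr_of_eventuallyEq ?_
    filter_upwards [Icc_mem_nhds h2.1 h2.2] with y hy using hx y hy

theorem aux_phi_mul (p x : ℝ) (hp : 1 < p) : PhiP p x * x = |x| ^ p := by
  unfold PhiP
  split_ifs with h
  · simp [h, Real.zero_rpow (by linarith : p ≠ 0)]
  · have : 0 < |x| := abs_pos.2 h
    rw [mul_assoc, ← abs_mul_abs_self, ← mul_assoc]
    nth_rewrite 2 [← Real.rpow_one |x|]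
    nth_rewrite 3 [← Real.rpow_one |x|]
    rw [← Real.rpow_add this, ← Real.rpow_add this]
    congr 1; ring

theorem aux_phi_abs (p x : ℝ) (hp : 1 < p) : |PhiP p x| = |x| ^ (p - 1) := by
  unfold PhiP
  split_ifs with h
  · simp [h, Real.zero_rpow (by linarith : p - 1 ≠ 0)]
  · have : 0 < |x| := abs_pos.2 h
    rw [abs_mul, abs_of_nonneg (Real.rpow_nonneg this.le _)]
    nth_rewrite 2 [← Real.rpow_one |x|]
    rw [← Real.rpow_add this]
    congr 1; ring

theorem aux_phi_pow (p x : ℝ) (hp : 1 < p) : |PhiP p x| ^ (p / (p - 1)) = |x| ^ p := by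
  rw [aux_phi_abs p x hp, ← Real.rpow_mul (abs_nonneg _)]
  congr 1; field_simp [(by linarith : p - 1 ≠ 0)]

theorem aux_phi_inv (p x : ℝ) (hp : 1 < p) :
    |PhiP p x| ^ (p / (p - 1) - 2) * PhiP p x = x := by
  rw [aux_phi_abs p x hp, ← Real.rpow_mul (abs_nonneg _)]
  unfold PhiP
  split_ifs with h
  · simp [h]
  · have : 0 < |x| := abs_pos.2 h
    rw [← mul_assoc, ← Real.rpow_add this]
    have : (p - 1) * (p / (p - 1) - 2) + (p - 2) = 0 := by
      have : p - 1 ≠ 0 := by linarith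
      field_simp; ring
    rw [this]; simp

theorem aux_contDiff_G (m : ℝ) (hm : 1 < m) : ContDiff ℝ 1 (fun x : ℝ => |x| ^ m) := by
  simpa [Real.norm_eq_abs] using (contDiff_norm_rpow (E := ℝ) hm)

theorem aux_one_lt (p : ℝ) (hp : 1 < p) : 1 < p / (p - 1) := by
  rw [lt_div_iff₀ (by linarith)]; linarith

theorem aux_cont_inv (m : ℝ) (hm : 1 < m) : Continuous (fun x : ℝ => |x| ^ (m - 2) * x) := by
  have h1 := (aux_contDiff_G m hm).continuous_deriv (by norm_num)
  have h2 : deriv (fun x : ℝ => |x| ^ m) = fun x => m * |x| ^ (m - 2) * x := by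
    ext x; exact (hasDerivAt_abs_rpow x hm).deriv
  rw [h2] at h1
  convert (continuous_const (y := m⁻¹)).mul h1 using 1
  ext x
  have : m ≠ 0 := by linarith
  simp only [Pi.mul_apply]
  field_simp

theorem aux_cont_u' (p : ℝ) (hp : 1 < p) {u' : ℝ → ℝ} {s r : ℝ}
    (hw : ContinuousOn (fun t => PhiP p (u' t)) (Set.Icc s r)) : ContinuousOn u' (Set.Icc s r) := by
  have := (aux_cont_inv _ (aux_one_lt p hp)).comp_continuousOn hw
  refine this.congr fun x _ => (aux_phi_inv p (u' x) hp).symm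

theorem aux_F_pos (φ : ℝ → ℝ) (hφ : Continuous φ)
    (hs : ∀ᵐ τ ∂(volume : Measure ℝ), 0 < τ * φ τ) (x : ℝ) (hx : x ≠ 0) :
    0 < ∫ t in (0:ℝ)..x, φ t := by
  rcases lt_or_gt_of_ne hx with h | h
  · rw [intervalIntegral.integral_symm, ← intervalIntegral.integral_neg]
    have := intervalIntegral.integral_lt_integral_of_ae_le_of_measure_setOfPred_lt_ne_zero
      (μ := volume) (f := fun _ => (0:ℝ)) (g := fun t => - φ t) h.le (by simp) (hφ.neg.intervalIntegrable _ _) ?_ ?_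
    · simpa using this
    · rw [EventuallyLE, ae_restrict_iff' measurableSet_Ioc]
      filter_upwards [hs] with t ht h2
      by_contra hh; push Not at hh
      nlinarith [h2.2]
    · intro h0
      have h1 : ∀ᵐ t ∂(volume.restrict (Set.Ioc x 0)), ¬ ((0:ℝ) < - φ t) := by
        rw [ae_iff]; simpa using h0
      rw [ae_restrict_iff' measurableSet_Ioc] at h1
      have h2 : ∀ᵐ t ∂(volume : Measure ℝ), t ∉ Set.Ioc x 0 := by
        filter_upwards [hs, h1] with t ht h3 h4
        have := h3 h4
        push Not at this
        nlinarith [h4.2]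
      have h5 : volume (Set.Ioc x 0) = 0 := by
        rw [ae_iff] at h2; simp only [not_not] at h2; exact h2
      simp at h5; linarith
  · have := intervalIntegral.integral_lt_integral_of_ae_le_of_measure_setOfPred_lt_ne_zero
      (μ := volume) (f := fun _ => (0:ℝ)) (g := fun t => φ t) h.le (by simp) (hφ.intervalIntegrable _ _) ?_ ?_
    · simpa using this
    · rw [EventuallyLE, ae_restrict_iff' measurableSet_Ioc]
      filter_upwards [hs] with t ht h2
      by_contra hh; push Not at hh
      nlinarith [h2.1]
    · intro h0
      have h1 : ∀ᵐ t ∂(volume.restrict (Set.Ioc 0 x)), ¬ ((0:ℝ) < φ t) := by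
        rw [ae_iff]; simpa using h0
      rw [ae_restrict_iff' measurableSet_Ioc] at h1
      have h2 : ∀ᵐ t ∂(volume : Measure ℝ), t ∉ Set.Ioc 0 x := by
        filter_upwards [hs, h1] with t ht h3 h4
        have := h3 h4
        push Not at this
        nlinarith [h4.1]
      have h5 : volume (Set.Ioc 0 x) = 0 := by
        rw [ae_iff] at h2; simp only [not_not] at h2; exact h2
      simp at h5; linarith

theorem aux_F_deriv (φ : ℝ → ℝ) (hφ : Continuous φ) (x : ℝ) :
    HasDerivAt (fun x => ∫ t in (0:ℝ)..x, φ t) (φ x) x :=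
  intervalIntegral.integral_hasDerivAt_right (hφ.intervalIntegrable _ _)
    (hφ.stronglyMeasurableAtFilter _ _) hφ.continuousAt

theorem aux_F_C1 (φ : ℝ → ℝ) (hφ : Continuous φ) :
    ContDiff ℝ 1 (fun x => ∫ t in (0:ℝ)..x, φ t) := by
  rw [contDiff_one_iff_deriv]
  refine ⟨fun x => (aux_F_deriv φ hφ x).differentiableAt, ?_⟩
  have : deriv (fun x => ∫ t in (0:ℝ)..x, φ t) = φ := by
    ext x; exact (aux_F_deriv φ hφ x).deriv
  rw [this]; exact hφ

/-- Crude Beesack–Das type inequality. -/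
theorem aux_BD (p l s r : ℝ) (hp : 1 < p) (hl0 : 0 < l) (hlp : l < p)
    (Q V f U : ℝ → ℝ≥0∞)
    (hQ : AEMeasurable Q (volume.restrict (Set.Ioc s r)))
    (hV : AEMeasurable V (volume.restrict (Set.Ioc s r)))
    (hf : AEMeasurable f (volume.restrict (Set.Ioc s r)))
    (hV0 : ∀ᵐ t ∂(volume.restrict (Set.Ioc s r)), V t ≠ 0 ∧ V t ≠ ⊤)
    (hU : ∀ t ∈ Set.Ioc s r, U t ≤ ∫⁻ σ in Set.Ioc s t, f σ) :
    ∫⁻ t in Set.Ioc s r, Q t * U t ^ l * f t ^ (p - l) ≤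
      (∫⁻ t in Set.Ioc s r, Q t ^ (p / l) * V t ^ (-((p - l) / l)) *
        (∫⁻ σ in Set.Ioc s t, V σ ^ (-(1 / (p - 1)))) ^ (p - 1)) ^ (l / p) *
      ∫⁻ t in Set.Ioc s r, V t * f t ^ p := by
  have hp0 : 0 < p := by linarith
  have hp1 : 0 < p - 1 := by linarith
  have hpl : 0 < p - l := by linarith
  set μ := volume.restrict (Set.Ioc s r) with hμ
  set Y := ∫⁻ t in Set.Ioc s r, V t * f t ^ p with hY
  set W : ℝ → ℝ≥0∞ := fun t => ∫⁻ σ in Set.Ioc s t, V σ ^ (-(1 / (p - 1))) with hW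
  have hWm : Measurable W := by
    apply Monotone.measurable
    intro x y hxy
    exact lintegral_mono_set (Set.Ioc_subset_Ioc_right hxy)
  have hmain : ∀ t ∈ Set.Ioc s r, U t ≤ W t ^ ((p - 1) / p) * Y ^ (1 / p) := by
    intro t ht
    have hsub : Set.Ioc s t ⊆ Set.Ioc s r := Set.Ioc_subset_Ioc_right ht.2
    have hle : volume.restrict (Set.Ioc s t) ≤ μ := Measure.restrict_mono hsub le_rfl
    have hac := hle.absolutelyContinuous
    have hHC : (p / (p - 1)).HolderConjugate p := by
      rw [Real.holderConjugate_iff]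
      refine ⟨by rw [lt_div_iff₀ hp1]; linarith, ?_⟩
      field_simp; ring
    have h1 := ENNReal.lintegral_mul_le_Lp_mul_Lq (volume.restrict (Set.Ioc s t)) hHC
      (f := fun σ => V σ ^ (-(1 / p))) (g := fun σ => V σ ^ (1 / p) * f σ)
      ((hV.mono_measure hle).pow_const _)
      (((hV.mono_measure hle).pow_const _).mul (hf.mono_measure hle))
    refine (hU t ht).trans ?_
    have h2 : ∫⁻ σ in Set.Ioc s t, f σ = ∫⁻ σ in Set.Ioc s t,
        ((fun σ => V σ ^ (-(1 / p))) * (fun σ => V σ ^ (1 / p) * f σ)) σ := by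
      apply lintegral_congr_ae
      filter_upwards [hac.ae_le hV0] with σ hσ
      simp only [Pi.mul_apply]
      rw [← mul_assoc, ← ENNReal.rpow_add _ _ hσ.1 hσ.2]
      simp
    rw [h2]
    refine h1.trans ?_
    have e1 : ∀ σ, (V σ ^ (-(1 / p))) ^ (p / (p - 1)) = V σ ^ (-(1 / (p - 1))) := by
      intro σ; rw [← ENNReal.rpow_mul]; congr 1; field_simp
    have e2 : ∀ σ, (V σ ^ (1 / p) * f σ) ^ p = V σ * f σ ^ p := by
      intro σ; rw [ENNReal.mul_rpow_of_nonneg _ _ hp0.le, ← ENNReal.rpow_mul]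
      rw [one_div_mul_cancel hp0.ne', ENNReal.rpow_one]
    simp only [e1, e2]
    have e3 : 1 / (p / (p - 1)) = (p - 1) / p := by field_simp
    rw [e3]
    gcongr
    exact lintegral_mono_set hsub
  have hHC : (p / l).HolderConjugate (p / (p - l)) := by
    rw [Real.holderConjugate_iff]
    refine ⟨by rw [lt_div_iff₀ hl0]; linarith, ?_⟩
    field_simp; ring
  have hfm : AEMeasurable (fun t => Q t * W t ^ (l * ((p - 1) / p)) * V t ^ (-((p - l) / p))) μ :=
    (hQ.mul (hWm.aemeasurable.pow_const _)).mul (hV.pow_const _)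
  have hgm : AEMeasurable (fun t => (V t * f t ^ p) ^ ((p - l) / p)) μ :=
    (hV.mul (hf.pow_const _)).pow_const _
  have h3 := ENNReal.lintegral_mul_le_Lp_mul_Lq μ hHC hfm hgm
  have h4 : ∫⁻ t, Q t * U t ^ l * f t ^ (p - l) ∂μ ≤ ∫⁻ t, Y ^ (l / p) *
      ((fun t => Q t * W t ^ (l * ((p - 1) / p)) * V t ^ (-((p - l) / p))) *
        (fun t => (V t * f t ^ p) ^ ((p - l) / p))) t ∂μ := by
    apply lintegral_mono_ae
    filter_upwards [hV0, ae_restrict_mem measurableSet_Ioc] with t ht hts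
    simp only [Pi.mul_apply]
    have e1 : (V t * f t ^ p) ^ ((p - l) / p) = V t ^ ((p - l) / p) * f t ^ (p - l) := by
      rw [ENNReal.mul_rpow_of_nonneg _ _ (by positivity), ← ENNReal.rpow_mul]
      congr 2; field_simp
    have e2 : V t ^ (-((p - l) / p)) * V t ^ ((p - l) / p) = 1 := by
      rw [← ENNReal.rpow_add _ _ ht.1 ht.2]; simp
    calc Q t * U t ^ l * f t ^ (p - l)
        ≤ Q t * (W t ^ ((p - 1) / p) * Y ^ (1 / p)) ^ l * f t ^ (p - l) := by
          gcongr; exact hmain t hts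
      _ = Q t * (W t ^ (l * ((p - 1) / p)) * Y ^ (l / p)) * f t ^ (p - l) := by
          rw [ENNReal.mul_rpow_of_nonneg _ _ hl0.le, ← ENNReal.rpow_mul, ← ENNReal.rpow_mul]
          congr 4 <;> ring
      _ = Y ^ (l / p) * (Q t * W t ^ (l * ((p - 1) / p)) * (1 * f t ^ (p - l))) := by ring
      _ = _ := by rw [e1, ← e2]; ring
      _ ≤ _ := le_rfl
  refine h4.trans ?_
  rw [lintegral_const_mul'' _ (hfm.mul hgm)]
  have e5 : ∀ t, (Q t * W t ^ (l * ((p - 1) / p)) * V t ^ (-((p - l) / p))) ^ (p / l) =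
      Q t ^ (p / l) * V t ^ (-((p - l) / l)) * W t ^ (p - 1) := by
    intro t
    rw [ENNReal.mul_rpow_of_nonneg _ _ (by positivity), ENNReal.mul_rpow_of_nonneg _ _ (by positivity),
      ← ENNReal.rpow_mul, ← ENNReal.rpow_mul]
    have a1 : l * ((p - 1) / p) * (p / l) = p - 1 := by field_simp
    have a2 : -((p - l) / p) * (p / l) = -((p - l) / l) := by field_simp
    rw [a1, a2]; ring
  have e6 : ∀ t, ((V t * f t ^ p) ^ ((p - l) / p)) ^ (p / (p - l)) = V t * f t ^ p := by
    intro t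
    rw [← ENNReal.rpow_mul]
    have a1 : (p - l) / p * (p / (p - l)) = 1 := by field_simp
    rw [a1, ENNReal.rpow_one]
  simp only [e5, e6] at h3
  have a3 : 1 / (p / l) = l / p := by field_simp
  have a4 : 1 / (p / (p - l)) = (p - l) / p := by field_simp
  rw [a3, a4] at h3
  calc _ ≤ Y ^ (l / p) * ((∫⁻ t, Q t ^ (p / l) * V t ^ (-((p - l) / l)) * W t ^ (p - 1) ∂μ) ^ (l / p)
          * Y ^ ((p - l) / p)) := by gcongr
    _ = (∫⁻ t, Q t ^ (p / l) * V t ^ (-((p - l) / l)) * W t ^ (p - 1) ∂μ) ^ (l / p)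
          * (Y ^ (l / p) * Y ^ ((p - l) / p)) := by ring
    _ = _ := by
      rw [← ENNReal.rpow_add_of_nonneg _ _ (by positivity) (by positivity)]
      have : l / p + (p - l) / p = 1 := by field_simp; ring
      rw [this, ENNReal.rpow_one]

theorem aux_K_small (p l : ℝ) (hp : 1 < p) (hl0 : 0 < l) (hlp : l < p) (q v : ℝ → ℝ) (s r : ℝ)
    (hsr : s < r) (hK : BDK p l q v s (Set.Ioc s r) < ⊤) :
    ∃ r', s < r' ∧ r' ≤ r ∧ ∀ t ≤ r', (∫⁻ t in Set.Ioc s t,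
      ENNReal.ofReal (q t) ^ (p / l) * ENNReal.ofReal (v t) ^ (-((p - l) / l)) *
        (∫⁻ σ in Set.Ioc s t, ENNReal.ofReal (v σ) ^ (-(1 / (p - 1)))) ^ (p - 1)) ^ (l / p) ≤ 1 := by
  unfold BDK at hK
  set J : ℝ → ℝ≥0∞ := fun t => ENNReal.ofReal (q t) ^ (p / l) * ENNReal.ofReal (v t) ^ (-((p - l) / l)) *
        (∫⁻ σ in Set.Ioc s t, ENNReal.ofReal (v σ) ^ (-(1 / (p - 1)))) ^ (p - 1) with hJ
  have hp0 : 0 < p := by linarith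
  have hpl : 0 < p - l := by linarith
  have hc : ENNReal.ofReal (((p - l) / p) ^ ((p - l) / p)) ≠ 0 := by
    rw [Ne, ENNReal.ofReal_eq_zero, not_le]; positivity
  have hI : ∫⁻ t in Set.Ioc s r, J t ≠ ⊤ := by
    intro h
    rw [h, ENNReal.top_rpow_of_pos (by positivity), ENNReal.mul_top hc] at hK
    exact lt_irrefl _ hK
  have ht : Tendsto (fun t => ∫⁻ x in Set.Ioc s t, J x ∂(volume.restrict (Set.Ioc s r)))
      (nhdsWithin s (Set.Ioi s)) (nhds 0) := by
    apply tendsto_setLIntegral_zero hI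
    have h1 : Tendsto (fun t => ENNReal.ofReal (t - s)) (nhdsWithin s (Set.Ioi s)) (nhds 0) := by
      have : Continuous (fun t => ENNReal.ofReal (t - s)) :=
        ENNReal.continuous_ofReal.comp (continuous_id.sub continuous_const)
      simpa using (this.tendsto s).mono_left nhdsWithin_le_nhds
    refine tendsto_of_tendsto_of_tendsto_of_le_of_le tendsto_const_nhds h1 (fun _ => zero_le) ?_
    intro t
    simp only [Function.comp]
    refine (Measure.restrict_le_self _).trans ?_
    rw [Real.volume_Ioc]
  have h2 := ht.eventually (Iio_mem_nhds (zero_lt_one))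
  obtain ⟨r', h3, h4, h5⟩ := (h2.and (Ioc_mem_nhdsGT hsr)).exists
  refine ⟨r', h4, h5, fun t htr => ?_⟩
  have h6 : ∫⁻ x in Set.Ioc s t, J x ≤ 1 := by
    refine le_trans (lintegral_mono_set (Set.Ioc_subset_Ioc_right htr)) ?_
    rw [Measure.restrict_restrict measurableSet_Ioc, Set.inter_eq_left.2 (Set.Ioc_subset_Ioc_right h5)] at h3
    exact le_of_lt h3
  exact ENNReal.rpow_le_one h6 (by positivity)

theorem aux_energy
    (p l n : ℝ) (hp : 1 < p) (hl0 : 0 < l) (hlp : l < p)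
    (φ : ℝ → ℝ) (hφcont : Continuous φ)
    (a a' q : ℝ → ℝ) (h : ℝ → ℝ → ℝ → ℝ) (θ : ℝ) (u u' v' : ℝ → ℝ) (s r : ℝ) (hsr : s ≤ r)
    (haAC : ACOn a a' s r)
    (hapos : ∀ᵐ τ ∂(volume.restrict (Set.Icc s r)), 0 < a τ)
    (hvint : IntegrableOn (deltaA n p a a') (Set.Icc s r))
    (hqint : IntegrableOn q (Set.Icc s r))
    (hgrowth : ∀ᵐ τ ∂(volume.restrict (Set.Icc s r)),
      ∀ lam₀ lam₁ : ℝ, h τ lam₀ lam₁ * lam₁ ≤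
        θ * q τ * |lam₀| ^ l * |lam₁| ^ (p - l) + (1 - θ) * deltaA n p a a' τ * |lam₁| ^ p)
    (huAC : ACOn u u' s r)
    (hvAC : ACOn (fun τ => PhiP p (u' τ)) v' s r)
    (hODE : ∀ᵐ τ ∂(volume.restrict (Set.Icc s r)),
      a τ * v' τ + (n - 1) * (a τ / τ) * PhiP p (u' τ)
        - h τ (u τ) (u' τ) + φ (u τ) = 0)
    (hus : u s = 0) (hu's : u' s = 0) (har : 0 ≤ a r) :
    IntegrableOn (fun t => q t * |u t| ^ l * |u' t| ^ (p - l)) (Set.Ioc s r) ∧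
    IntegrableOn (fun t => deltaA n p a a' t * |u' t| ^ p) (Set.Ioc s r) ∧
    (∫ t in (0:ℝ)..(u r), φ t) ≤ θ * ((∫ t in Set.Ioc s r, q t * |u t| ^ l * |u' t| ^ (p - l))
      - ∫ t in Set.Ioc s r, deltaA n p a a' t * |u' t| ^ p) := by
  have hp1 : 0 < p - 1 := by linarith
  have hp0 : 0 < p := by linarith
  obtain ⟨aAC, aD⟩ := aux_ACOn hsr haAC
  obtain ⟨uAC, uD⟩ := aux_ACOn hsr huAC
  obtain ⟨wAC, wD⟩ := aux_ACOn hsr hvAC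
  have hm := aux_one_lt p hp
  have hucont : ContinuousOn u (Set.Icc s r) := by
    have := uAC.continuousOn; rwa [Set.uIcc_of_le hsr] at this
  have hu'cont : ContinuousOn u' (Set.Icc s r) := by
    have := wAC.continuousOn; rw [Set.uIcc_of_le hsr] at this
    exact aux_cont_u' p hp this
  have c1 : ContinuousOn (fun t => |u t| ^ l * |u' t| ^ (p - l)) (Set.Icc s r) :=
    (hucont.abs.rpow_const (fun _ _ => Or.inr hl0.le)).mul
      (hu'cont.abs.rpow_const (fun _ _ => Or.inr (by linarith)))
  have c2 : ContinuousOn (fun t => |u' t| ^ p) (Set.Icc s r) :=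
    (hu'cont.abs.rpow_const (fun _ _ => Or.inr hp0.le))
  have I1 : IntegrableOn (fun t => q t * |u t| ^ l * |u' t| ^ (p - l)) (Set.Icc s r) := by
    simpa only [mul_assoc] using hqint.mul_continuousOn c1 isCompact_Icc
  have I2 : IntegrableOn (fun t => deltaA n p a a' t * |u' t| ^ p) (Set.Icc s r) :=
    hvint.mul_continuousOn c2 isCompact_Icc
  have J1 := I1.mono_set (Set.Ioc_subset_Icc_self (a := s) (b := r))
  have J2 := I2.mono_set (Set.Ioc_subset_Icc_self (a := s) (b := r))
  refine ⟨J1, J2, ?_⟩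
  set F : ℝ → ℝ := fun x => ∫ t in (0:ℝ)..x, φ t with hF
  set E : ℝ → ℝ := fun t => ((p - 1) / p) * (a t * |PhiP p (u' t)| ^ (p / (p - 1))) + F (u t) with hE
  have EAC : AbsolutelyContinuousOnInterval E s r := by
    have h1 := aux_ac_comp (aux_contDiff_G _ hm) wAC
    have h2 := (aAC.fun_mul h1).const_mul ((p - 1) / p)
    exact h2.fun_add (aux_ac_comp (aux_F_C1 φ hφcont) uAC)
  have hFTC := EAC.integral_deriv_eq_sub
  have hEs : E s = 0 := by
    simp only [hE, hus, hu's, hF]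
    have : p / (p - 1) ≠ 0 := by positivity
    simp [PhiP, Real.zero_rpow this]
  have hEr : F (u r) ≤ E r := by
    simp only [hE]
    have : 0 ≤ ((p - 1) / p) * (a r * |PhiP p (u' r)| ^ (p / (p - 1))) := by positivity
    linarith
  have hle : ∀ᵐ t ∂(volume.restrict (Set.Icc s r)), deriv E t ≤
      θ * (q t * |u t| ^ l * |u' t| ^ (p - l) - deltaA n p a a' t * |u' t| ^ p) := by
    have hIoo : ∀ᵐ t ∂(volume.restrict (Set.Icc s r)), t ∈ Set.Ioo s r := by
      rw [← restrict_Ioo_eq_restrict_Icc]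
      exact ae_restrict_mem measurableSet_Ioo
    filter_upwards [ae_restrict_of_ae aD, ae_restrict_of_ae uD, ae_restrict_of_ae wD, hgrowth, hODE,
      hIoo] with t d1 d2 d3 hg ho ht
    have hd := (((d1 ht).mul ((hasDerivAt_abs_rpow (PhiP p (u' t)) hm).comp t (d3 ht))).const_mul
      ((p - 1) / p)).add ((aux_F_deriv φ hφcont (u t)).comp t (d2 ht))
    have hd' : HasDerivAt E _ t := hd
    rw [hd'.deriv]
    have k1 := aux_phi_inv p (u' t) hp
    have k2 := aux_phi_pow p (u' t) hp
    have k3 := aux_phi_mul p (u' t) hp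
    have hg1 := hg (u t) (u' t)
    simp only [Function.comp]
    rw [mul_assoc (p / (p - 1)), k1, k2]
    have k4 : (p - 1) / p * (p / (p - 1)) = 1 := by field_simp
    have ho2 : a t * v' t * u' t = - ((n - 1) * (a t / t) * |u' t| ^ p) + h t (u t) (u' t) * u' t
        - φ (u t) * u' t := by
      rw [← k3]; linear_combination (u' t) * ho
    have : (p - 1) / p * (a' t * |u' t| ^ p + a t * (p / (p - 1) * u' t * v' t)) + φ (u t) * u' t
        = h t (u t) (u' t) * u' t - deltaA n p a a' t * |u' t| ^ p := by
      have e : (p - 1) / p * (a' t * |u' t| ^ p + a t * (p / (p - 1) * u' t * v' t)) =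
        (p - 1) / p * a' t * |u' t| ^ p + ((p - 1) / p * (p / (p - 1))) * (a t * v' t * u' t) := by ring
      rw [e, k4, ho2]
      have e2 : (1 - 1 / p) = (p - 1) / p := by field_simp
      unfold deltaA
      rw [e2]; ring
    rw [this]
    nlinarith [hg1]
  have hIm : (∫ x in s..r, deriv E x) ≤
      ∫ t in s..r, θ * (q t * |u t| ^ l * |u' t| ^ (p - l) - deltaA n p a a' t * |u' t| ^ p) := by
    apply intervalIntegral.integral_mono_ae_restrict hsr EAC.intervalIntegrable_deriv _ hle
    rw [intervalIntegrable_iff_integrableOn_Icc_of_le hsr]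
    exact (I1.sub I2).const_mul θ
  rw [hFTC, hEs, intervalIntegral.integral_of_le hsr, integral_const_mul, integral_sub J1 J2] at hIm
  linarith

theorem aux_local
    (p l n : ℝ) (hp : 1 < p) (hl0 : 0 < l) (hlp : l < p)
    (φ : ℝ → ℝ) (hφcont : Continuous φ)
    (hφsign : ∀ᵐ τ ∂(volume : Measure ℝ), 0 < τ * φ τ)
    (a a' q : ℝ → ℝ) (hqmeas : Measurable q)
    (h : ℝ → ℝ → ℝ → ℝ) (θ : ℝ) (hθ0 : 0 < θ) (u u' v' : ℝ → ℝ) (s r : ℝ) (hsr : s ≤ r)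
    (haAC : ACOn a a' s r)
    (hapos : ∀ᵐ τ ∂(volume.restrict (Set.Icc s r)), 0 < a τ)
    (hvpos : ∀ᵐ τ ∂(volume.restrict (Set.Icc s r)), 0 < deltaA n p a a' τ)
    (hvint : IntegrableOn (deltaA n p a a') (Set.Icc s r))
    (hqint : IntegrableOn q (Set.Icc s r))
    (hq0 : ∀ᵐ τ ∂(volume.restrict (Set.Icc s r)), 0 ≤ q τ)
    (hgrowth : ∀ᵐ τ ∂(volume.restrict (Set.Icc s r)),
      ∀ lam₀ lam₁ : ℝ, h τ lam₀ lam₁ * lam₁ ≤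
        θ * q τ * |lam₀| ^ l * |lam₁| ^ (p - l) + (1 - θ) * deltaA n p a a' τ * |lam₁| ^ p)
    (huAC : ACOn u u' s r)
    (hvAC : ACOn (fun τ => PhiP p (u' τ)) v' s r)
    (hODE : ∀ᵐ τ ∂(volume.restrict (Set.Icc s r)),
      a τ * v' τ + (n - 1) * (a τ / τ) * PhiP p (u' τ)
        - h τ (u τ) (u' τ) + φ (u τ) = 0)
    (hus : u s = 0) (hu's : u' s = 0) (har : 0 ≤ a r)
    (hK : (∫⁻ t in Set.Ioc s r,
      ENNReal.ofReal (q t) ^ (p / l) * ENNReal.ofReal (deltaA n p a a' t) ^ (-((p - l) / l)) *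
        (∫⁻ σ in Set.Ioc s t, ENNReal.ofReal (deltaA n p a a' σ) ^ (-(1 / (p - 1)))) ^ (p - 1)) ^ (l / p) ≤ 1) :
    u r = 0 := by
  obtain ⟨J1, J2, hen⟩ := aux_energy p l n hp hl0 hlp φ hφcont a a' q h θ u u' v' s r hsr haAC hapos
    hvint hqint hgrowth huAC hvAC hODE hus hu's har
  have hsub := Set.Ioc_subset_Icc_self (a := s) (b := r)
  have hvpos' := ae_restrict_of_ae_restrict_of_subset hsub hvpos
  have hq0' := ae_restrict_of_ae_restrict_of_subset hsub hq0
  have hu'm : AEMeasurable u' (volume.restrict (Set.Ioc s r)) :=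
    (huAC.1.mono_set hsub).aemeasurable
  have hBD := aux_BD p l s r hp hl0 hlp (fun t => ENNReal.ofReal (q t))
    (fun t => ENNReal.ofReal (deltaA n p a a' t)) (fun t => ENNReal.ofReal |u' t|)
    (fun t => ENNReal.ofReal |u t|)
    hqmeas.aemeasurable.ennreal_ofReal
    (hvint.mono_set hsub).aemeasurable.ennreal_ofReal
    hu'm.abs.ennreal_ofReal
    (by filter_upwards [hvpos'] with t ht; simp [ht])
    (by
      intro t ht
      have h1 := huAC.2 t ⟨ht.1.le, ht.2⟩
      rw [hus, zero_add, intervalIntegral.integral_of_le ht.1.le] at h1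
      rw [h1]
      have := enorm_integral_le_lintegral_enorm (μ := volume.restrict (Set.Ioc s t)) u'
      simpa only [← ofReal_norm_eq_enorm, Real.norm_eq_abs] using this)
  have hAY := hBD.trans (mul_le_mul_left hK _)
  rw [one_mul] at hAY
  have e1 : ∫⁻ t in Set.Ioc s r, ENNReal.ofReal (q t) * ENNReal.ofReal |u t| ^ l * ENNReal.ofReal |u' t| ^ (p - l)
      = ENNReal.ofReal (∫ t in Set.Ioc s r, q t * |u t| ^ l * |u' t| ^ (p - l)) := by
    rw [ofReal_integral_eq_lintegral_ofReal J1]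
    · apply lintegral_congr_ae
      filter_upwards [hq0'] with t ht
      rw [ENNReal.ofReal_mul (by positivity), ENNReal.ofReal_mul ht,
        ENNReal.ofReal_rpow_of_nonneg (abs_nonneg _) hl0.le,
        ENNReal.ofReal_rpow_of_nonneg (abs_nonneg _) (by linarith)]
    · filter_upwards [hq0'] with t ht
      simp only [Pi.zero_apply]
      positivity
  have hn2 : 0 ≤ᵐ[volume.restrict (Set.Ioc s r)] fun t => deltaA n p a a' t * |u' t| ^ p := by
    filter_upwards [hvpos'] with t ht
    simp only [Pi.zero_apply]
    positivity
  have e2 : ∫⁻ t in Set.Ioc s r, ENNReal.ofReal (deltaA n p a a' t) * ENNReal.ofReal |u' t| ^ p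
      = ENNReal.ofReal (∫ t in Set.Ioc s r, deltaA n p a a' t * |u' t| ^ p) := by
    rw [ofReal_integral_eq_lintegral_ofReal J2 hn2]
    apply lintegral_congr_ae
    filter_upwards [hvpos'] with t ht
    rw [ENNReal.ofReal_mul ht.le,
        ENNReal.ofReal_rpow_of_nonneg (abs_nonneg _) (by linarith)]
  rw [e1, e2, ENNReal.ofReal_le_ofReal_iff (integral_nonneg_of_ae hn2)] at hAY
  by_contra hne
  have hpos := aux_F_pos φ hφcont hφsign (u r) hne
  have : θ * ((∫ t in Set.Ioc s r, q t * |u t| ^ l * |u' t| ^ (p - l))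
      - ∫ t in Set.Ioc s r, deltaA n p a a' t * |u' t| ^ p) ≤ 0 :=
    mul_nonpos_of_nonneg_of_nonpos hθ0.le (by linarith)
  linarith

theorem aux_nonneg {a : ℝ → ℝ} {s r : ℝ} (hsr : s < r) (hc : ContinuousOn a (Set.Icc s r))
    (hapos : ∀ᵐ τ ∂(volume.restrict (Set.Icc s r)), 0 < a τ) : 0 ≤ a r := by
  by_contra hneg
  push Not at hneg
  have h1 : ∀ᶠ t in nhdsWithin r (Set.Icc s r), a t < 0 :=
    (hc r ⟨hsr.le, le_rfl⟩).eventually (Iio_mem_nhds hneg)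
  have h2 : ∀ᶠ t in nhdsWithin r (Set.Iio r), a t < 0 := by
    have : nhdsWithin r (Set.Iio r) ≤ nhdsWithin r (Set.Icc s r) := by
      rw [← nhdsWithin_Ico_eq_nhdsLT hsr]
      exact nhdsWithin_mono _ Set.Ico_subset_Icc_self
    exact this h1
  obtain ⟨c, hc1, hc2⟩ := (mem_nhdsLT_iff_exists_Ioo_subset' hsr).1 h2
  rw [ae_restrict_iff' measurableSet_Icc] at hapos
  have hm : c ⊔ s < r := max_lt hc1 hsr
  have h3 : volume (Set.Ioo (c ⊔ s) r) = 0 := by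
    refine measure_mono_null ?_ (ae_iff.1 hapos)
    intro t ht hh
    have := hc2 (⟨lt_of_le_of_lt le_sup_left ht.1, ht.2⟩ : t ∈ Set.Ioo c r)
    have h5 := hh ⟨le_of_lt (lt_of_le_of_lt le_sup_right ht.1), ht.2.le⟩
    simp only [Set.mem_setOf_eq] at this
    linarith
  rw [Real.volume_Ioo] at h3
  simp only [ENNReal.ofReal_eq_zero] at h3
  linarith

/-- **Support of the solution (nondivergent form)**. -/
theorem support_nondivergent
    (p l n : ℝ) (R : ℝ≥0∞)
    (hp : 1 < p) (hl0 : 0 < l) (hlp : l < p) (hn : 1 ≤ n) (hR : 0 < R)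
    (φ : ℝ → ℝ) (hφcont : Continuous φ) (hφodd : ∀ t : ℝ, φ (-t) = -φ t)
    (hφsign : ∀ᵐ τ ∂(volume : Measure ℝ), 0 < τ * φ τ)
    (a a' : ℝ → ℝ)
    (haAC : ∀ s r : ℝ, 0 < s → s ≤ r → ENNReal.ofReal r < R → ACOn a a' s r)
    (q : ℝ → ℝ) (hqmeas : Measurable q)
    (hapos : ∀ᵐ τ ∂(volume.restrict {τ : ℝ | 0 < τ ∧ ENNReal.ofReal τ < R}), 0 < a τ)
    (hvpos : ∀ᵐ τ ∂(volume.restrict {τ : ℝ | 0 < τ ∧ ENNReal.ofReal τ < R}), 0 < deltaA n p a a' τ)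
    (hvint : ∀ s r : ℝ, 0 < s → s ≤ r → ENNReal.ofReal r < R →
      IntegrableOn (deltaA n p a a') (Set.Icc s r) ∧
        IntegrableOn (fun τ => deltaA n p a a' τ ^ (-(1 / (p - 1)))) (Set.Icc s r))
    (hqint : ∀ s r : ℝ, 0 < s → s ≤ r → ENNReal.ofReal r < R → IntegrableOn q (Set.Icc s r))
    (h : ℝ → ℝ → ℝ → ℝ)
    (hhmeas : ∀ lam₀ lam₁ : ℝ, Measurable fun τ => h τ lam₀ lam₁)
    (hhcont : ∀ τ : ℝ, Continuous fun z : ℝ × ℝ => h τ z.1 z.2)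
    (θ : ℝ) (hθ0 : 0 < θ) (hθ1 : θ ≤ 1)
    (hq0 : ∀ᵐ τ ∂(volume.restrict {τ : ℝ | 0 < τ ∧ ENNReal.ofReal τ < R}), 0 ≤ q τ)
    (hgrowth : ∀ᵐ τ ∂(volume.restrict {τ : ℝ | 0 < τ ∧ ENNReal.ofReal τ < R}),
      ∀ lam₀ lam₁ : ℝ, h τ lam₀ lam₁ * lam₁ ≤
        θ * q τ * |lam₀| ^ l * |lam₁| ^ (p - l) + (1 - θ) * deltaA n p a a' τ * |lam₁| ^ p)
    (hK : ∀ s r : ℝ, 0 < s → s < r → ENNReal.ofReal r < R →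
      BDK p l q (deltaA n p a a') s (Set.Ioc s r) < ⊤)
    (u u' v' : ℝ → ℝ)
    (huAC : ∀ s r : ℝ, 0 < s → s ≤ r → ENNReal.ofReal r < R → ACOn u u' s r)
    (hvAC : ∀ s r : ℝ, 0 < s → s ≤ r → ENNReal.ofReal r < R →
      ACOn (fun τ => PhiP p (u' τ)) v' s r)
    (hODE : ∀ᵐ τ ∂(volume.restrict {τ : ℝ | 0 < τ ∧ ENNReal.ofReal τ < R}),
      a τ * v' τ + (n - 1) * (a τ / τ) * PhiP p (u' τ)
        - h τ (u τ) (u' τ) + φ (u τ) = 0) :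
    ∀ s : ℝ, 0 < s → ENNReal.ofReal s < R → u s = 0 → u' s = 0 →
      ∀ τ : ℝ, s ≤ τ → ENNReal.ofReal τ < R → u τ = 0 := by
  intro s hs hsR hus hu's T hsT hTR
  rcases hsT.eq_or_lt with rfl | hsT'
  · exact hus
  have hRle : ∀ {x y : ℝ}, x ≤ y → ENNReal.ofReal y < R → ENNReal.ofReal x < R :=
    fun hxy hy => lt_of_le_of_lt (ENNReal.ofReal_le_ofReal hxy) hy
  have hsub : ∀ {x y : ℝ}, 0 < x → ENNReal.ofReal y < R →
      Set.Icc x y ⊆ {τ : ℝ | 0 < τ ∧ ENNReal.ofReal τ < R} :=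
    fun hx hy t ht => ⟨lt_of_lt_of_le hx ht.1, hRle ht.2 hy⟩
  have hucont : ContinuousOn u (Set.Icc s T) := by
    have := (aux_ACOn hsT (huAC s T hs hsT hTR)).1.continuousOn
    rwa [Set.uIcc_of_le hsT] at this
  have hu'cont : ContinuousOn u' (Set.Icc s T) := by
    have := (aux_ACOn hsT (hvAC s T hs hsT hTR)).1.continuousOn
    rw [Set.uIcc_of_le hsT] at this
    exact aux_cont_u' p hp this
  set Z : Set ℝ := {t | u t = 0 ∧ u' t = 0} with hZ
  have hclosed : IsClosed (Z ∩ Set.Icc s T) := by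
    have := (hucont.prodMk hu'cont).preimage_isClosed_of_isClosed isClosed_Icc
      (isClosed_singleton (x := ((0:ℝ), (0:ℝ))))
    convert this using 1
    ext t
    simp [hZ, and_comm]
  have key : Set.Icc s T ⊆ Z := by
    apply hclosed.Icc_subset_of_forall_exists_gt ⟨hus, hu's⟩
    rintro x ⟨⟨hx0, hx1⟩, hxs, hxT⟩ y hy
    have hxpos : 0 < x := lt_of_lt_of_le hs hxs
    obtain ⟨r, hxr, hrT, hr⟩ := aux_K_small p l hp hl0 hlp q (deltaA n p a a') x T hxT
      (hK x T hxpos hxT hTR)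
    have hzero : ∀ t, x < t → t ≤ r → u t = 0 := by
      intro t hxt htr
      have htR : ENNReal.ofReal t < R := hRle (htr.trans hrT) hTR
      have hS := hsub hxpos htR
      have hap := ae_restrict_of_ae_restrict_of_subset hS hapos
      have hac : ContinuousOn a (Set.Icc x t) := by
        have := (aux_ACOn hxt.le (haAC x t hxpos hxt.le htR)).1.continuousOn
        rwa [Set.uIcc_of_le hxt.le] at this
      exact aux_local p l n hp hl0 hlp φ hφcont hφsign a a' q hqmeas h θ hθ0 u u' v' x t hxt.le
        (haAC x t hxpos hxt.le htR) hap
        (ae_restrict_of_ae_restrict_of_subset hS hvpos)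
        (hvint x t hxpos hxt.le htR).1 (hqint x t hxpos hxt.le htR)
        (ae_restrict_of_ae_restrict_of_subset hS hq0)
        (ae_restrict_of_ae_restrict_of_subset hS hgrowth)
        (huAC x t hxpos hxt.le htR) (hvAC x t hxpos hxt.le htR)
        (ae_restrict_of_ae_restrict_of_subset hS hODE)
        hx0 hx1 (aux_nonneg hxt hac hap) (hr t htr)
    have hrR : ENNReal.ofReal r < R := hRle hrT hTR
    have hD := (aux_ACOn hxr.le (huAC x r hxpos hxr.le hrR)).2
    have hm : x < min y r := lt_min hy hxr
    by_contra hne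
    rw [Set.not_nonempty_iff_eq_empty] at hne
    have h3 : volume (Set.Ioo x (min y r)) = 0 := by
      refine measure_mono_null ?_ (ae_iff.1 hD)
      intro t ht hh
      have htr : t < r := lt_of_lt_of_le ht.2 (min_le_right _ _)
      have hd := hh ⟨ht.1, htr⟩
      have hd0 : HasDerivAt u 0 t := by
        refine (hasDerivAt_const t (0:ℝ)).congr_of_eventuallyEq ?_
        filter_upwards [Ioo_mem_nhds ht.1 htr] with z hz using hzero z hz.1 hz.2.le
      have : t ∈ Z ∩ Set.Ioc x y :=
        ⟨⟨hzero t ht.1 htr.le, hd.unique hd0⟩, ht.1, (lt_of_lt_of_le ht.2 (min_le_left _ _)).le⟩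
      rw [hne] at this
      exact this
    rw [Real.volume_Ioo] at h3
    simp only [ENNReal.ofReal_eq_zero] at h3
    linarith
  exact (key ⟨hsT, le_rfl⟩).1
end
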